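/- arXiv:2011.13266 — 2 statements merged into one kernel-verified Lean document; each statement's English description precedes it below -/
import Mathlib

section
/- There exists an absolute constant C > 0 such that the following holds. Let Q ≥ 2 and m ≥ 2 be integers and n ≥ 1 an integer. Suppose B is a subset of Q_{≤Q} such that for every integer q with 1 ≤ q ≤ Q we have |B ∩ Q_{=q}| ≤ n. Then E_{2m}(B) ≤ (log(mQ))^{C^m} · (Q·n)^m. -/
/-- The set of reduced rationals `a/q ∈ [0,1]` with `1 ≤ a ≤ q` and `gcd(a,q) = 1`. -/
def Qeq (q : ℕ) : Finset ℚ :=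
  ((Finset.Icc 1 q).filter fun a => Nat.gcd a q = 1).image fun a : ℕ => (a : ℚ) / (q : ℚ)

/-- The set of rationals in `[0,1]` with denominator at most `Q`. -/
def Qle (Q : ℕ) : Finset ℚ := (Finset.Icc 1 Q).biUnion Qeq

/-- The `2m`-fold additive energy of `B`: the number of tuples
`(b₁, …, b₂ₘ) ∈ B^{2m}` with `b₁ + ⋯ + bₘ = bₘ₊₁ + ⋯ + b₂ₘ`. -/
def addEnergy (m : ℕ) (B : Finset ℚ) : ℕ :=
  (((Fintype.piFinset fun _ : Fin m => B) ×ˢ Fintype.piFinset fun _ : Fin m => B).filter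
    fun p => (∑ i, p.1 i) = ∑ i, p.2 i).card

/-! ### Sums of products of periodic functions -/

lemma sum_range_mul_eq (f : ℕ → ℝ) (M p : ℕ) :
    ∑ x ∈ Finset.range (M * p), f x =
      ∑ x ∈ Finset.range M, ∑ t ∈ Finset.range p, f (x + M * t) := by
  rw [Finset.sum_comm]
  induction p with
  | zero => simp
  | succ p ih =>
    rw [Nat.mul_succ, Finset.sum_range_add, ih, Finset.sum_range_succ]
    simp only [add_comm]

lemma Function.Periodic.sum_range_mul_left {φ : ℕ → ℝ} {p k : ℕ} (hφ : Function.Periodic φ p)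
    (hp : 0 < p) (hk : p.Coprime k) :
    ∑ t ∈ Finset.range p, φ (k * t) = ∑ t ∈ Finset.range p, φ t := by
  have hmaps : ∀ t ∈ Finset.range p, k * t % p ∈ Finset.range p :=
    fun t _ => Finset.mem_range.2 (Nat.mod_lt _ hp)
  have hinj : Set.InjOn (fun t => k * t % p) (Finset.range p : Set ℕ) := by
    intro a ha b hb hab
    have h : a ≡ b [MOD p] := Nat.ModEq.cancel_left_of_coprime hk hab
    rw [Finset.coe_range, Set.mem_Iio] at ha hb
    exact h.eq_of_lt_of_lt ha hb
  have hsurj := Finset.surjOn_of_injOn_of_card_le _ hmaps hinj le_rfl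
  exact Finset.sum_bij (fun t _ => k * t % p) hmaps (fun a ha b hb => hinj ha hb)
    (fun b hb => by simpa using hsurj hb) fun t _ => (hφ.map_mod_nat _).symm

lemma Function.Periodic.sum_range_add_one {φ : ℕ → ℝ} {p : ℕ} (hφ : Function.Periodic φ p) :
    ∑ t ∈ Finset.range p, φ (t + 1) = ∑ t ∈ Finset.range p, φ t := by
  have h := Finset.sum_range_succ φ p
  rw [Finset.sum_range_succ', ← zero_add p, hφ 0, zero_add] at h
  exact add_right_cancel h

/-- Hölder's inequality for at least two functions, each measured in `ℓ²`. -/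
lemma sum_prod_le_prod_sqrt {ι : Type*} [DecidableEq ι] (R : Finset ℕ) (s : Finset ι)
    (u : ι → ℕ → ℝ) (hu : ∀ i t, 0 ≤ u i t) {i j : ι} (hi : i ∈ s) (hj : j ∈ s) (hij : i ≠ j) :
    ∑ t ∈ R, ∏ k ∈ s, u k t ≤ ∏ k ∈ s, √(∑ t ∈ R, u k t ^ 2) := by
  have hj' : j ∈ s.erase i := Finset.mem_erase.2 ⟨hij.symm, hj⟩
  have hle : ∀ t ∈ R, ∀ k, u k t ≤ √(∑ t ∈ R, u k t ^ 2) := fun t ht k =>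
    Real.le_sqrt_of_sq_le
      (Finset.single_le_sum (f := fun t => u k t ^ 2) (fun _ _ => sq_nonneg _) ht)
  simp only [← Finset.mul_prod_erase s _ hi, ← Finset.mul_prod_erase (s.erase i) _ hj']
  calc ∑ t ∈ R, u i t * (u j t * ∏ k ∈ (s.erase i).erase j, u k t)
      ≤ ∑ t ∈ R, u i t * u j t * ∏ k ∈ (s.erase i).erase j, √(∑ t ∈ R, u k t ^ 2) := by
        refine Finset.sum_le_sum fun t ht => ?_
        rw [← mul_assoc]
        exact mul_le_mul_of_nonneg_left
          (Finset.prod_le_prod (fun k _ => hu k t) fun k _ => hle t ht k)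
          (mul_nonneg (hu i t) (hu j t))
    _ ≤ _ := by
        rw [← Finset.sum_mul, ← mul_assoc]
        exact mul_le_mul_of_nonneg_right (Real.sum_mul_le_sqrt_mul_sqrt R (u i) (u j))
          (Finset.prod_nonneg fun _ _ => Real.sqrt_nonneg _)

/-- A Shearer-type inequality: if `q i ∣ L` for all `i` and, for each prime `p ∣ L`, at least two of
the `q i` have the same `p`-adic valuation as `L`, then the sum over a period `L` of a product of
nonnegative `q i`-periodic functions is at most the product of their `ℓ²` norms. -/
lemma sum_range_prod_periodic_le {ι : Type*} [Fintype ι] (L : ℕ) (hL : 0 < L) (q : ι → ℕ)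
    (hq : ∀ i, q i ∣ L)
    (htwo : ∀ p, p.Prime → p ∣ L → ∃ i j, i ≠ j ∧ ¬ q i ∣ L / p ∧ ¬ q j ∣ L / p)
    (g : ι → ℕ → ℝ) (hg : ∀ i x, 0 ≤ g i x) (hper : ∀ i, Function.Periodic (g i) (q i)) :
    ∑ x ∈ Finset.range L, ∏ i, g i x ≤ ∏ i, √(∑ x ∈ Finset.range (q i), g i x ^ 2) := by
  classical
  induction L using Nat.strong_induction_on generalizing q g with
  | _ L ih =>
  rcases Nat.lt_or_ge 1 L with h1 | h1
  swap
  · obtain rfl : L = 1 := le_antisymm h1 hL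
    have hq1 : ∀ i, q i = 1 := fun i => Nat.dvd_one.1 (hq i)
    simp [hq1, Real.sqrt_sq (hg _ _)]
  obtain ⟨p, hp, M, rfl⟩ := Nat.exists_prime_and_dvd h1.ne'
  have hM : 0 < M := Nat.pos_of_mul_pos_left hL
  have hdiv : p * M / p = M := Nat.mul_div_cancel_left _ hp.pos
  set G : ι → ℕ → ℝ := fun i x =>
    if q i ∣ M then g i x else √(∑ t ∈ Finset.range p, g i (x + M * t) ^ 2) with hG
  set q' : ι → ℕ := fun i => if q i ∣ M then q i else q i / p with hq'
  have hpq : ∀ i, ¬ q i ∣ M → p ∣ q i := fun i hi => by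
    by_contra h
    exact hi ((((Nat.Prime.coprime_iff_not_dvd hp).2 h).symm).dvd_of_dvd_mul_left (hq i))
  have hGsq : ∀ i, ¬ q i ∣ M → ∀ x,
      G i x = √(∑ t ∈ Finset.range p, g i (x + q i / p * t) ^ 2) := by
    intro i hi x
    obtain ⟨r, hr⟩ := hpq i hi
    have hrM : r ∣ M := Nat.dvd_of_mul_dvd_mul_left hp.pos (hr ▸ hq i)
    obtain ⟨k, hk⟩ := hrM
    have hpk : ¬ p ∣ k := by
      rintro ⟨l, rfl⟩
      exact hi ⟨l, by rw [hk, hr]; ring⟩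
    have hφ : Function.Periodic (fun t => g i (x + r * t) ^ 2) p := by
      intro t
      have := hper i (x + r * t)
      rw [hr] at this
      simp only [← this]
      congr 2
      ring
    have := hφ.sum_range_mul_left hp.pos ((Nat.Prime.coprime_iff_not_dvd hp).2 hpk)
    simp only [hG, if_neg hi]
    rw [hr, Nat.mul_div_cancel_left _ hp.pos, ← this, hk]
    simp only [mul_assoc]
  have hstep : ∑ x ∈ Finset.range (p * M), ∏ i, g i x ≤ ∑ x ∈ Finset.range M, ∏ i, G i x := by
    rw [mul_comm, sum_range_mul_eq]
    refine Finset.sum_le_sum fun x _ => ?_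
    obtain ⟨i, j, hij, hi, hj⟩ := htwo p hp (dvd_mul_right _ _)
    rw [hdiv] at hi hj
    have hconst : ∀ t, ∏ i with q i ∣ M, g i (x + M * t) = ∏ i with q i ∣ M, G i x := by
      intro t
      refine Finset.prod_congr rfl fun k hk => ?_
      rw [Finset.mem_filter] at hk
      obtain ⟨c, hc⟩ := hk.2
      simp only [hG, if_pos hk.2]
      rw [show x + M * t = x + (c * t) * q k by rw [hc]; ring]
      exact (hper k).nat_mul (c * t) x
    have hrest : ∏ i with ¬ q i ∣ M, G i x =
        ∏ i with ¬ q i ∣ M, √(∑ t ∈ Finset.range p, g i (x + M * t) ^ 2) :=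
      Finset.prod_congr rfl fun k hk => if_neg (Finset.mem_filter.1 hk).2
    simp only [← Finset.prod_filter_mul_prod_filter_not Finset.univ (fun i => q i ∣ M)]
    simp only [hconst, ← Finset.mul_sum]
    refine mul_le_mul_of_nonneg_left ?_ (hconst 0 ▸ Finset.prod_nonneg fun k _ => hg k _)
    rw [hrest]
    exact sum_prod_le_prod_sqrt _ _ (fun i t => g i (x + M * t)) (fun _ _ => hg _ _)
      (Finset.mem_filter.2 ⟨Finset.mem_univ i, hi⟩) (Finset.mem_filter.2 ⟨Finset.mem_univ j, hj⟩)
      hij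
  have hnorm : ∀ i, ∑ x ∈ Finset.range (q' i), G i x ^ 2 = ∑ x ∈ Finset.range (q i), g i x ^ 2 := by
    intro i
    by_cases hi : q i ∣ M
    · simp [hG, hq', hi]
    · simp only [hGsq i hi, Real.sq_sqrt (Finset.sum_nonneg fun _ _ => sq_nonneg (g i _))]
      simp only [hq', if_neg hi]
      rw [← sum_range_mul_eq (fun x => g i x ^ 2), Nat.div_mul_cancel (hpq i hi)]
  refine hstep.trans ?_
  simp only [← hnorm]
  refine ih M (lt_mul_left hM hp.one_lt) hM q' ?_ ?_ G ?_ ?_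
  · intro i
    by_cases hi : q i ∣ M
    · simp [hq', hi]
    · simp only [hq', if_neg hi]
      exact Nat.dvd_of_mul_dvd_mul_left hp.pos (by rw [Nat.mul_div_cancel' (hpq i hi)]; exact hq i)
  · intro r hr hrM
    have key : ∀ i, ¬ q i ∣ p * M / r → ¬ q' i ∣ M / r := by
      intro i hi h
      apply hi
      rw [Nat.mul_div_assoc _ hrM]
      by_cases hiM : q i ∣ M
      · simp only [hq', if_pos hiM] at h
        exact h.mul_left p
      · simp only [hq', if_neg hiM] at h
        rw [← Nat.mul_div_cancel' (hpq i hiM)]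
        exact Nat.mul_dvd_mul_left p h
    obtain ⟨i, j, hij, hi, hj⟩ := htwo r hr (hrM.mul_left p)
    exact ⟨i, j, hij, key i hi, key j hj⟩
  · intro i x
    simp only [hG]
    split_ifs
    exacts [hg i x, Real.sqrt_nonneg _]
  · intro i x
    by_cases hi : q i ∣ M
    · simpa [hG, hq', hi] using hper i x
    · rw [hGsq i hi, hGsq i hi]
      simp only [hq', if_neg hi]
      obtain ⟨r, hr⟩ := hpq i hi
      rw [hr, Nat.mul_div_cancel_left _ hp.pos]
      have hφ : Function.Periodic (fun t => g i (x + r * t) ^ 2) p := by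
        intro t
        have := hper i (x + r * t)
        rw [hr] at this
        simp only [← this]
        congr 2
        ring
      rw [← hφ.sum_range_add_one]
      congr 1
      refine Finset.sum_congr rfl fun t _ => ?_
      congr 2
      ring

/-! ### The divisor function -/

lemma card_divisors_mul_le (a b : ℕ) :
    (a * b).divisors.card ≤ a.divisors.card * b.divisors.card := by
  rw [Nat.divisors_mul]
  exact Finset.card_mul_le

lemma sum_mul_card_divisors_le (f : ℕ → ℝ) (hf : ∀ a, 0 ≤ f a)
    (hmul : ∀ a b, f (a * b) ≤ f a * f b) (X : ℕ) :
    ∑ L ∈ Finset.Icc 1 X, f L * L.divisors.card / L ≤ (∑ L ∈ Finset.Icc 1 X, f L / L) ^ 2 := by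
  have hS : ∀ L ∈ Finset.Icc 1 X, f L * L.divisors.card / L =
      ∑ x ∈ L.divisorsAntidiagonal, f (x.1 * x.2) / ((x.1 : ℝ) * x.2) := by
    intro L _
    have : ∀ x ∈ L.divisorsAntidiagonal, f (x.1 * x.2) / ((x.1 : ℝ) * x.2) = f L / L := by
      intro x hx
      rw [← Nat.cast_mul, (Nat.mem_divisorsAntidiagonal.1 hx).1]
    rw [Finset.sum_congr rfl this, Finset.sum_const, nsmul_eq_mul,
      ← Nat.map_div_right_divisors, Finset.card_map]
    ring
  rw [Finset.sum_congr rfl hS, sq, Finset.sum_mul_sum, ← Finset.sum_product', Finset.sum_sigma']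
  have hnn : ∀ x : ℕ × ℕ, 0 ≤ f x.1 / (x.1 : ℝ) * (f x.2 / x.2) := fun x =>
    mul_nonneg (div_nonneg (hf _) (Nat.cast_nonneg _)) (div_nonneg (hf _) (Nat.cast_nonneg _))
  have hle : ∀ x : (_ : ℕ) × (ℕ × ℕ),
      f (x.2.1 * x.2.2) / ((x.2.1 : ℝ) * x.2.2) ≤ f x.2.1 / (x.2.1 : ℝ) * (f x.2.2 / x.2.2) := by
    intro x
    rw [div_mul_div_comm]
    exact div_le_div_of_nonneg_right (hmul _ _) (by positivity)
  refine (Finset.sum_le_sum fun x _ => hle x).trans ?_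
  have hinj : Set.InjOn (fun x : (_ : ℕ) × (ℕ × ℕ) => x.2)
      ((Finset.Icc 1 X).sigma fun L => L.divisorsAntidiagonal : Finset _) := by
    rintro ⟨L, x⟩ hx ⟨L', x'⟩ hx' (rfl : x = x')
    simp only [Finset.coe_sigma, Set.mem_sigma_iff, Finset.mem_coe,
      Nat.mem_divisorsAntidiagonal] at hx hx'
    obtain rfl : L = L' := hx.2.1.symm.trans hx'.2.1
    rfl
  rw [← Finset.sum_image (f := fun x : ℕ × ℕ => f x.1 / (x.1 : ℝ) * (f x.2 / x.2)) hinj]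
  refine Finset.sum_le_sum_of_subset_of_nonneg ?_ fun x _ _ => hnn x
  intro x hx
  simp only [Finset.mem_image, Finset.mem_sigma, Finset.mem_Icc,
    Nat.mem_divisorsAntidiagonal] at hx
  obtain ⟨⟨L, y⟩, ⟨⟨hL1, hLX⟩, hy, hL0⟩, rfl⟩ := hx
  dsimp only at hy hL0 hL1 hLX ⊢
  rw [Finset.mem_product, Finset.mem_Icc, Finset.mem_Icc]
  subst hy
  obtain ⟨h1, h2⟩ := Nat.mul_ne_zero_iff.1 hL0
  have h1' := Nat.pos_of_ne_zero h1
  have h2' := Nat.pos_of_ne_zero h2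
  exact ⟨⟨h1', (Nat.le_mul_of_pos_right _ h2').trans hLX⟩,
    h2', (Nat.le_mul_of_pos_left _ h1').trans hLX⟩

lemma sum_card_divisors_pow_div_le (k X : ℕ) :
    ∑ L ∈ Finset.Icc 1 X, (L.divisors.card : ℝ) ^ k / L ≤ (1 + Real.log X) ^ 2 ^ k := by
  induction k with
  | zero =>
    have := harmonic_le_one_add_log X
    simpa [harmonic_eq_sum_Icc] using this
  | succ k ih =>
    have h := sum_mul_card_divisors_le (fun L => (L.divisors.card : ℝ) ^ k)
      (fun _ => by positivity) (fun a b => by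
        rw [← mul_pow]
        exact pow_le_pow_left₀ (by positivity) (by exact_mod_cast card_divisors_mul_le a b) k) X
    simp only [← pow_succ] at h
    refine h.trans ?_
    rw [pow_succ 2 k, pow_mul]
    exact pow_le_pow_left₀ (Finset.sum_nonneg fun _ _ => by positivity) ih 2

lemma sum_inv_lcm_le {ι : Type*} [Fintype ι] [DecidableEq ι] (Q : ℕ) :
    ∑ q ∈ Fintype.piFinset fun _ : ι => Finset.Icc 1 Q, ((Finset.univ.lcm q : ℕ) : ℝ)⁻¹ ≤
      (1 + Fintype.card ι * Real.log Q) ^ 2 ^ Fintype.card ι := by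
  have hmaps : ∀ q ∈ Fintype.piFinset fun _ : ι => Finset.Icc 1 Q,
      Finset.univ.lcm q ∈ Finset.Icc 1 (Q ^ Fintype.card ι) := by
    intro q hq
    simp only [Fintype.mem_piFinset, Finset.mem_Icc] at hq
    have hprod : 0 < ∏ i, q i := Finset.prod_pos fun i _ => (hq i).1
    have hdvd : Finset.univ.lcm q ∣ ∏ i, q i :=
      Finset.lcm_dvd fun i hi => Finset.dvd_prod_of_mem q hi
    refine Finset.mem_Icc.2 ⟨Nat.pos_of_dvd_of_pos hdvd hprod, (Nat.le_of_dvd hprod hdvd).trans ?_⟩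
    exact (Finset.prod_le_pow_card _ _ _ fun i _ => (hq i).2).trans_eq (by simp)
  rw [← Finset.sum_fiberwise_of_maps_to hmaps, ← Real.log_pow, ← Nat.cast_pow]
  refine le_trans (Finset.sum_le_sum fun L hL => ?_) (sum_card_divisors_pow_div_le _ _)
  have hconst : ∀ q ∈ (Fintype.piFinset fun _ : ι => Finset.Icc 1 Q).filter
      (fun q => Finset.univ.lcm q = L), ((Finset.univ.lcm q : ℕ) : ℝ)⁻¹ = (L : ℝ)⁻¹ :=
    fun q hq => by rw [(Finset.mem_filter.1 hq).2]
  rw [Finset.sum_congr rfl hconst, Finset.sum_const, nsmul_eq_mul, div_eq_mul_inv]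
  refine mul_le_mul_of_nonneg_right ?_ (by positivity)
  have hsub : (Fintype.piFinset fun _ : ι => Finset.Icc 1 Q).filter
      (fun q => Finset.univ.lcm q = L) ⊆ Fintype.piFinset fun _ : ι => L.divisors := by
    intro q hq
    rw [Fintype.mem_piFinset]
    intro i
    rw [Nat.mem_divisors, ← (Finset.mem_filter.1 hq).2]
    refine ⟨Finset.dvd_lcm (Finset.mem_univ i), ?_⟩
    rw [(Finset.mem_filter.1 hq).2]
    have := (Finset.mem_Icc.1 hL).1
    omega
  have := Finset.card_le_card hsub
  rw [Fintype.card_piFinset, Finset.prod_const, Finset.card_univ] at this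
  exact_mod_cast this

/-! ### Additive characters on the rationals -/

/-- The additive character `x ↦ exp (2 π i x)` of `ℚ`. -/
noncomputable def ratChar (x : ℚ) : ℂ := Complex.exp (2 * Real.pi * Complex.I * x)

lemma ratChar_add (x y : ℚ) : ratChar (x + y) = ratChar x * ratChar y := by
  simp only [ratChar, ← Complex.exp_add]
  push_cast
  ring_nf

lemma ratChar_zero : ratChar 0 = 1 := by simp [ratChar]

lemma ratChar_sum {ι : Type*} (s : Finset ι) (b : ι → ℚ) :
    ratChar (∑ i ∈ s, b i) = ∏ i ∈ s, ratChar (b i) := by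
  simp only [ratChar, ← Complex.exp_sum]
  push_cast
  rw [Finset.mul_sum]

lemma conj_ratChar (x : ℚ) : (starRingEnd ℂ) (ratChar x) = ratChar (-x) := by
  simp [ratChar, ← Complex.exp_conj, Complex.conj_ofNat]

lemma ratChar_eq_one_iff (x : ℚ) : ratChar x = 1 ↔ ∃ k : ℤ, x = k := by
  rw [ratChar, Complex.exp_eq_one_iff]
  refine exists_congr fun k => ?_
  rw [mul_comm, mul_left_inj' Complex.two_pi_I_ne_zero]
  exact_mod_cast Iff.rfl

lemma ratChar_pow (x : ℚ) (n : ℕ) : ratChar x ^ n = ratChar (n * x) := by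
  rw [ratChar, ratChar, ← Complex.exp_nat_mul]
  push_cast
  ring_nf

lemma exists_mul_eq_intCast {x : ℚ} {n : ℕ} (h : x.den ∣ n) : ∃ k : ℤ, (n : ℚ) * x = k := by
  obtain ⟨c, rfl⟩ := h
  refine ⟨c * x.num, ?_⟩
  push_cast
  rw [← Rat.den_mul_eq_num x]
  ring

lemma den_dvd_of_mul_eq_intCast {x : ℚ} {n : ℕ} {k : ℤ} (h : (n : ℚ) * x = k) : x.den ∣ n := by
  have h' : (n : ℤ) * x.num = k * x.den := by
    have hx := Rat.den_mul_eq_num x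
    have : (n : ℚ) * x.num = k * x.den := by rw [← hx, ← h]; ring
    exact_mod_cast this
  have hdvd : (x.den : ℤ) ∣ n * x.num := ⟨k, by rw [h', mul_comm]⟩
  have hcop : IsCoprime (x.den : ℤ) x.num := by
    rw [Int.isCoprime_iff_nat_coprime]
    simpa using x.reduced.symm
  exact_mod_cast hcop.dvd_of_dvd_mul_right hdvd

lemma ratChar_pow_den {x : ℚ} {n : ℕ} (h : x.den ∣ n) : ratChar x ^ n = 1 := by
  rw [ratChar_pow, ratChar_eq_one_iff]
  exact exists_mul_eq_intCast h

lemma sum_range_pow_of_pow_eq_one {z : ℂ} {L : ℕ} (hz : z ^ L = 1) :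
    ∑ x ∈ Finset.range L, z ^ x = if z = 1 then (L : ℂ) else 0 := by
  split_ifs with h
  · simp [h]
  · rw [geom_sum_eq h, hz, sub_self, zero_div]

/-- The exponential sum over a finite set of rationals at integer frequencies. -/
noncomputable def expSum (S : Finset ℚ) (x : ℕ) : ℂ := ∑ b ∈ S, ratChar b ^ x

lemma expSum_periodic {S : Finset ℚ} {q : ℕ} (hS : ∀ b ∈ S, b.den ∣ q) :
    Function.Periodic (expSum S) q := fun x =>
  Finset.sum_congr rfl fun b hb => by rw [pow_add, ratChar_pow_den (hS b hb), mul_one]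

/-- Parseval's identity for a set of rationals that are distinct modulo `1`. -/
lemma sum_norm_expSum_sq {S : Finset ℚ} {q : ℕ} (hS : ∀ b ∈ S, b.den ∣ q)
    (hinj : ∀ b ∈ S, ∀ c ∈ S, (∃ k : ℤ, b - c = k) → b = c) :
    ∑ x ∈ Finset.range q, ‖expSum S x‖ ^ 2 = q * S.card := by
  have hterm : ∀ x, ((‖expSum S x‖ ^ 2 : ℝ) : ℂ) = ∑ b ∈ S, ∑ c ∈ S, ratChar (b - c) ^ x := by
    intro x
    rw [Complex.ofReal_pow, ← Complex.mul_conj', expSum, map_sum, Finset.sum_mul_sum]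
    refine Finset.sum_congr rfl fun b _ => Finset.sum_congr rfl fun c _ => ?_
    rw [map_pow, conj_ratChar, ← mul_pow, ← ratChar_add, sub_eq_add_neg]
  have hpow : ∀ b ∈ S, ∀ c ∈ S, ratChar (b - c) ^ q = 1 := by
    intro b hb c hc
    obtain ⟨k, hk⟩ := exists_mul_eq_intCast (hS b hb)
    obtain ⟨l, hl⟩ := exists_mul_eq_intCast (hS c hc)
    rw [ratChar_pow, ratChar_eq_one_iff]
    exact ⟨k - l, by rw [mul_sub, hk, hl]; push_cast; ring⟩
  have : ((∑ x ∈ Finset.range q, ‖expSum S x‖ ^ 2 : ℝ) : ℂ) = q * S.card := by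
    rw [Complex.ofReal_sum, Finset.sum_congr rfl fun x _ => hterm x, Finset.sum_comm]
    have hb : ∀ b ∈ S, ∑ x ∈ Finset.range q, ∑ c ∈ S, ratChar (b - c) ^ x = q := by
      intro b hb
      rw [Finset.sum_comm, Finset.sum_eq_single b]
      · simp [ratChar_zero]
      · intro c hc hcb
        rw [sum_range_pow_of_pow_eq_one (hpow b hb c hc), if_neg]
        rw [ratChar_eq_one_iff]
        exact fun h => hcb (hinj b hb c hc h).symm
      · exact fun h => absurd hb h
    rw [Finset.sum_congr rfl hb, Finset.sum_const, nsmul_eq_mul, mul_comm]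
  exact_mod_cast this

lemma card_sum_eq_zero_le {ι : Type*} [Fintype ι] [DecidableEq ι] (S : ι → Finset ℚ) (L : ℕ)
    (hS : ∀ i, ∀ b ∈ S i, b.den ∣ L) :
    (L : ℝ) * ((Fintype.piFinset S).filter fun b => ∑ i, b i = 0).card ≤
      ∑ x ∈ Finset.range L, ∏ i, ‖expSum (S i) x‖ := by
  have hpow : ∀ b ∈ Fintype.piFinset S, ratChar (∑ i, b i) ^ L = 1 := by
    intro b hb
    rw [ratChar_sum, ← Finset.prod_pow]
    exact Finset.prod_eq_one fun i _ => ratChar_pow_den (hS i _ (Fintype.mem_piFinset.1 hb i))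
  have hsum : ∑ x ∈ Finset.range L, ∏ i, expSum (S i) x =
      ((L * ((Fintype.piFinset S).filter fun b => ratChar (∑ i, b i) = 1).card : ℝ) : ℂ) := by
    simp only [expSum, Finset.prod_univ_sum, Finset.prod_pow, ← ratChar_sum]
    rw [Finset.sum_comm, Finset.sum_congr rfl fun b hb => sum_range_pow_of_pow_eq_one (hpow b hb),
      ← Finset.sum_filter, Finset.sum_const, nsmul_eq_mul, mul_comm]
    push_cast
    rfl
  calc (L : ℝ) * ((Fintype.piFinset S).filter fun b => ∑ i, b i = 0).card
      ≤ L * ((Fintype.piFinset S).filter fun b => ratChar (∑ i, b i) = 1).card := by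
        gcongr with b
        intro h
        rw [h, ratChar_zero]
    _ = ‖∑ x ∈ Finset.range L, ∏ i, expSum (S i) x‖ := by
        rw [hsum, Complex.norm_real, Real.norm_of_nonneg (by positivity)]
    _ ≤ ∑ x ∈ Finset.range L, ∏ i, ‖expSum (S i) x‖ := by
        refine (norm_sum_le _ _).trans (Finset.sum_le_sum fun x _ => ?_)
        rw [norm_prod]

/-! ### Counting solutions -/

lemma exists_two_not_dvd_lcm_div {ι : Type*} [Fintype ι] (b : ι → ℚ)
    (hb : ∑ i, b i = 0) {p : ℕ} (hp : p.Prime)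
    (hpL : p ∣ Finset.univ.lcm fun i => (b i).den) :
    ∃ i j, i ≠ j ∧ ¬ (b i).den ∣ (Finset.univ.lcm fun i => (b i).den) / p ∧
      ¬ (b j).den ∣ (Finset.univ.lcm fun i => (b i).den) / p := by
  classical
  set L := Finset.univ.lcm fun i => (b i).den with hLdef
  have hL : 0 < L := by
    refine Nat.pos_of_ne_zero fun h => ?_
    obtain ⟨i, -, hi⟩ := Finset.lcm_eq_zero_iff.1 h
    exact (b i).den_nz hi
  obtain ⟨i, hi⟩ : ∃ i, ¬ (b i).den ∣ L / p := by
    by_contra! h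
    have hdvd : L ∣ L / p := Finset.lcm_dvd fun i _ => h i
    have h1 := Nat.le_of_dvd (Nat.div_pos (Nat.le_of_dvd hL hpL) hp.pos) hdvd
    exact absurd h1 (not_le.2 (Nat.div_lt_self hL hp.one_lt))
  by_contra! h
  have hothers : ∀ j ∈ Finset.univ.erase i, ∃ k : ℤ, ((L / p : ℕ) : ℚ) * b j = k := fun j hj =>
    exists_mul_eq_intCast (h i j (Finset.ne_of_mem_erase hj).symm hi)
  choose! k hk using hothers
  refine hi (den_dvd_of_mul_eq_intCast (k := -∑ j ∈ Finset.univ.erase i, k j) ?_)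
  rw [← Finset.add_sum_erase _ _ (Finset.mem_univ i)] at hb
  rw [eq_neg_of_add_eq_zero_left hb, mul_neg, Finset.mul_sum, Finset.sum_congr rfl hk]
  push_cast
  rfl

lemma card_sum_eq_zero_le_of_den {ι : Type*} [Fintype ι] [DecidableEq ι] (S : ι → Finset ℚ)
    (q : ι → ℕ) (hS : ∀ i, ∀ b ∈ S i, b.den = q i)
    (hinj : ∀ i, ∀ b ∈ S i, ∀ c ∈ S i, (∃ k : ℤ, b - c = k) → b = c) :
    (((Fintype.piFinset S).filter fun b => ∑ i, b i = 0).card : ℝ) ≤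
      (∏ i, √(q i * (S i).card)) * ((Finset.univ.lcm q : ℕ) : ℝ)⁻¹ := by
  rcases ((Fintype.piFinset S).filter fun b => ∑ i, b i = 0).eq_empty_or_nonempty with h | h
  · rw [h, Finset.card_empty, Nat.cast_zero]
    exact mul_nonneg (Finset.prod_nonneg fun _ _ => Real.sqrt_nonneg _) (by positivity)
  obtain ⟨b, hb⟩ := h
  rw [Finset.mem_filter, Fintype.mem_piFinset] at hb
  have hq : (fun i => (b i).den) = q := funext fun i => hS i _ (hb.1 i)
  have hqL : ∀ i, q i ∣ Finset.univ.lcm q := fun i => Finset.dvd_lcm (Finset.mem_univ i)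
  have hL : 0 < Finset.univ.lcm q := by
    refine Nat.pos_of_ne_zero fun h => ?_
    obtain ⟨i, -, hi⟩ := Finset.lcm_eq_zero_iff.1 h
    exact (b i).den_nz ((hS i _ (hb.1 i)).trans hi)
  rw [← div_eq_mul_inv, le_div_iff₀' (Nat.cast_pos.2 hL)]
  refine (card_sum_eq_zero_le S _ fun i c hc => hS i c hc ▸ hqL i).trans ?_
  refine (sum_range_prod_periodic_le _ hL q hqL ?_ (fun i x => ‖expSum (S i) x‖)
    (fun _ _ => norm_nonneg _) ?_).trans_eq ?_
  · intro p hp hpL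
    subst hq
    exact exists_two_not_dvd_lcm_div b hb.2 hp hpL
  · exact fun i => (expSum_periodic fun c hc => (hS i c hc).dvd).comp norm
  · simp only [fun i => sum_norm_expSum_sq (fun c hc => (hS i c hc).dvd) (hinj i)]

/-- Splitting the solutions of `∑ i, b i = 0` according to the denominators of the `b i`. -/
lemma card_sum_eq_zero_le_sum_den {ι : Type*} [Fintype ι] [DecidableEq ι] (T : ι → Finset ℚ)
    (Q n : ℕ) (hQ : ∀ i, ∀ b ∈ T i, b.den ≤ Q)
    (hn : ∀ i, ∀ q, 1 ≤ q → q ≤ Q → ((T i).filter fun b => b.den = q).card ≤ n)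
    (hinj : ∀ i, ∀ b ∈ T i, ∀ c ∈ T i, (∃ k : ℤ, b - c = k) → b = c) :
    (((Fintype.piFinset T).filter fun b => ∑ i, b i = 0).card : ℝ) ≤
      √(Q * n) ^ Fintype.card ι * (1 + Fintype.card ι * Real.log Q) ^ 2 ^ Fintype.card ι := by
  have hmaps : ∀ b ∈ (Fintype.piFinset T).filter fun b => ∑ i, b i = 0,
      (fun i => (b i).den) ∈ Fintype.piFinset fun _ : ι => Finset.Icc 1 Q := by
    intro b hb
    rw [Finset.mem_filter, Fintype.mem_piFinset] at hb
    exact Fintype.mem_piFinset.2 fun i =>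
      Finset.mem_Icc.2 ⟨(b i).den_pos, hQ i _ (hb.1 i)⟩
  rw [Finset.card_eq_sum_card_fiberwise hmaps, Nat.cast_sum]
  refine le_trans (Finset.sum_le_sum fun q hq => ?_) ((Finset.mul_sum _ _ _).symm.trans_le
    (mul_le_mul_of_nonneg_left (sum_inv_lcm_le Q) (by positivity)))
  simp only [Fintype.mem_piFinset, Finset.mem_Icc] at hq
  have hsub : ((Fintype.piFinset T).filter fun b => ∑ i, b i = 0).filter
        (fun b => (fun i => (b i).den) = q) ⊆
      (Fintype.piFinset fun i => (T i).filter fun b => b.den = q i).filter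
        fun b => ∑ i, b i = 0 := by
    intro b hb
    simp only [Finset.mem_filter, Fintype.mem_piFinset] at hb ⊢
    exact ⟨fun i => ⟨hb.1.1 i, congrFun hb.2 i⟩, hb.1.2⟩
  refine (Nat.cast_le.2 (Finset.card_le_card hsub)).trans ?_
  refine (card_sum_eq_zero_le_of_den _ q (fun i b hb => (Finset.mem_filter.1 hb).2)
    fun i b hb c hc => hinj i b (Finset.mem_filter.1 hb).1 c (Finset.mem_filter.1 hc).1).trans ?_
  refine mul_le_mul_of_nonneg_right ?_ (by positivity)
  rw [← Finset.card_univ, ← Finset.prod_const]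
  refine Finset.prod_le_prod (fun _ _ => Real.sqrt_nonneg _) fun i _ => Real.sqrt_le_sqrt ?_
  have h1 : (q i : ℝ) ≤ Q := Nat.cast_le.2 (hq i).2
  have h2 : (((T i).filter fun b => b.den = q i).card : ℝ) ≤ n :=
    Nat.cast_le.2 (hn i _ (hq i).1 (hq i).2)
  gcongr

lemma den_of_mem_Qeq {q : ℕ} {b : ℚ} (hb : b ∈ Qeq q) : b.den = q := by
  simp only [Qeq, Finset.mem_image, Finset.mem_filter, Finset.mem_Icc] at hb
  obtain ⟨a, ⟨⟨h1, hq⟩, hgcd⟩, rfl⟩ := hb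
  have := Rat.den_div_eq_of_coprime (a := (a : ℤ)) (b := (q : ℤ)) (by omega) (by simpa using hgcd)
  rw [Int.cast_natCast, Int.cast_natCast] at this
  exact Int.natCast_inj.1 this

lemma mem_Ioc_of_mem_Qeq {q : ℕ} {b : ℚ} (hb : b ∈ Qeq q) : 0 < b ∧ b ≤ 1 := by
  simp only [Qeq, Finset.mem_image, Finset.mem_filter, Finset.mem_Icc] at hb
  obtain ⟨a, ⟨⟨h1, hq⟩, -⟩, rfl⟩ := hb
  have ha : (0 : ℚ) < a := by exact_mod_cast h1
  have hq' : (0 : ℚ) < q := by exact_mod_cast h1.trans hq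
  exact ⟨div_pos ha hq', (div_le_one hq').2 (by exact_mod_cast hq)⟩

lemma addEnergy_le {Q n : ℕ} (m : ℕ) {B : Finset ℚ} (hB : B ⊆ Qle Q)
    (hn : ∀ q : ℕ, 1 ≤ q → q ≤ Q → (B ∩ Qeq q).card ≤ n) :
    (addEnergy m B : ℝ) ≤ ((Q : ℝ) * n) ^ m * (1 + 2 * m * Real.log Q) ^ 4 ^ m := by
  have hmem : ∀ b ∈ B, b ∈ Qeq b.den ∧ b.den ≤ Q := by
    intro b hb
    obtain ⟨q, hq, hbq⟩ := Finset.mem_biUnion.1 (hB hb)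
    obtain rfl := den_of_mem_Qeq hbq
    exact ⟨hbq, (Finset.mem_Icc.1 hq).2⟩
  have hcard : ∀ q, 1 ≤ q → q ≤ Q → (B.filter fun b => b.den = q).card ≤ n := by
    refine fun q h1 hq => (Finset.card_le_card fun b hb => ?_).trans (hn q h1 hq)
    obtain ⟨hbB, rfl⟩ := Finset.mem_filter.1 hb
    exact Finset.mem_inter.2 ⟨hbB, (hmem b hbB).1⟩
  have hinj : ∀ b ∈ B, ∀ c ∈ B, (∃ k : ℤ, b - c = k) → b = c := by
    rintro b hb c hc ⟨k, hk⟩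
    obtain ⟨hb0, hb1⟩ := mem_Ioc_of_mem_Qeq (hmem b hb).1
    obtain ⟨hc0, hc1⟩ := mem_Ioc_of_mem_Qeq (hmem c hc).1
    have h1 : (k : ℚ) < 1 := by linarith
    have h2 : (-1 : ℚ) < k := by linarith
    have h1' : k < 1 := by exact_mod_cast h1
    have h2' : -1 < k := by exact_mod_cast h2
    obtain rfl : k = 0 := by omega
    exact sub_eq_zero.1 (by simpa using hk)
  set N : Finset ℚ := B.map (Equiv.neg ℚ).toEmbedding with hN
  have hmemN : ∀ b, b ∈ N ↔ -b ∈ B := fun b => by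
    rw [hN, Finset.mem_map_equiv]
    rfl
  set T : Fin m ⊕ Fin m → Finset ℚ := Sum.elim (fun _ => B) fun _ => N
  have hE : addEnergy m B ≤ ((Fintype.piFinset T).filter fun b => ∑ i, b i = 0).card := by
    refine Finset.card_le_card_of_injOn (fun x => Sum.elim x.1 (-x.2)) ?_ ?_
    · rintro ⟨x, y⟩ hxy
      simp only [Finset.coe_filter, Finset.mem_product, Fintype.mem_piFinset,
        Set.mem_ofPred_eq] at hxy ⊢
      refine ⟨?_, by simp [hxy.2]⟩
      rintro (i | i)
      · exact hxy.1.1 i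
      · exact (hmemN _).2 (by simpa using hxy.1.2 i)
    · rintro ⟨x, y⟩ - ⟨x', y'⟩ - h
      refine Prod.ext (funext fun i => congrFun h (Sum.inl i)) (funext fun i => ?_)
      exact neg_injective (congrFun h (Sum.inr i))
  have hmain := card_sum_eq_zero_le_sum_den T Q n ?_ ?_ ?_
  · have hc : Fintype.card (Fin m ⊕ Fin m) = 2 * m := by simp [two_mul]
    rw [hc, pow_mul, Real.sq_sqrt (by positivity), pow_mul 2 2 m, Nat.cast_mul,
      Nat.cast_ofNat, show 2 ^ 2 = 4 from rfl] at hmain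
    exact (Nat.cast_le.2 hE).trans hmain
  · rintro (i | i) b hb
    · exact (hmem b hb).2
    · simpa using (hmem _ ((hmemN b).1 hb)).2
  · rintro (i | i) q h1 hq
    · exact hcard q h1 hq
    · refine (Finset.card_le_card_of_injOn (fun b => -b) (fun b hb => ?_)
        neg_injective.injOn).trans (hcard q h1 hq)
      obtain ⟨hbN, rfl⟩ := Finset.mem_filter.1 hb
      exact Finset.mem_coe.2 (Finset.mem_filter.2 ⟨(hmemN b).1 hbN, by simp⟩)
  · rintro (i | i) b hb c hc hbc
    · exact hinj b hb c hc hbc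
    · obtain ⟨k, hk⟩ := hbc
      refine neg_injective (hinj _ ((hmemN b).1 hb) _ ((hmemN c).1 hc) ⟨-k, ?_⟩)
      push_cast
      linarith

lemma one_add_two_mul_log_le {Q m : ℕ} (hQ : 2 ≤ Q) (hm : 2 ≤ m) :
    1 + 2 * m * Real.log Q ≤ Real.log ((m : ℝ) * Q) ^ (3 * m + 4) := by
  have hQ' : (2 : ℝ) ≤ Q := by exact_mod_cast hQ
  have hm' : (2 : ℝ) ≤ m := by exact_mod_cast hm
  set l := Real.log ((m : ℝ) * Q)
  have hl : (1.38 : ℝ) ≤ l := by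
    have h4 : Real.log 4 ≤ l := Real.log_le_log (by norm_num) (by nlinarith)
    have h2 : Real.log 4 = 2 * Real.log 2 := by
      rw [show (4 : ℝ) = 2 ^ 2 by norm_num, Real.log_pow]
      norm_num
    linarith [Real.log_two_gt_d9]
  have hlog : Real.log Q ≤ l := Real.log_le_log (by linarith) (by nlinarith)
  have h3 : (2 : ℝ) ≤ l ^ 3 :=
    le_trans (by norm_num) (pow_le_pow_left₀ (by norm_num) hl 3)
  have hpow : (m : ℝ) + 1 ≤ 2 ^ m := by
    have := one_add_mul_le_pow (show (-2 : ℝ) ≤ 1 by norm_num) m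
    norm_num at this
    linarith
  calc 1 + 2 * m * Real.log Q ≤ 2 * 2 ^ m * l := by nlinarith
    _ = 2 ^ (m + 1) * l := by ring
    _ ≤ (l ^ 3) ^ (m + 1) * l := by gcongr
    _ = l ^ (3 * m + 4) := by ring

theorem statement_1 :
    ∃ C > (0 : ℝ), ∀ Q m n : ℕ, 2 ≤ Q → 2 ≤ m → 1 ≤ n →
      ∀ B : Finset ℚ, B ⊆ Qle Q →
        (∀ q : ℕ, 1 ≤ q → q ≤ Q → (B ∩ Qeq q).card ≤ n) →
        (addEnergy m B : ℝ) ≤ Real.log ((m : ℝ) * Q) ^ (C ^ m) * ((Q : ℝ) * n) ^ m := by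
  refine ⟨64, by norm_num, fun Q m n hQ hm _ B hB hcard => ?_⟩
  have hlog := one_add_two_mul_log_le hQ hm
  set l := Real.log ((m : ℝ) * Q) with hl
  have hl1 : 1 ≤ l := by
    rw [hl, Real.le_log_iff_exp_le (by positivity)]
    have h4 : (4 : ℝ) ≤ m * Q := by exact_mod_cast Nat.mul_le_mul hm hQ
    linarith [Real.exp_one_lt_d9]
  have hexp : (3 * m + 4) * 4 ^ m ≤ 64 ^ m := by
    rw [show 64 = 16 * 4 by norm_num, mul_pow]
    refine Nat.mul_le_mul_right _ ?_
    clear * - hm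
    induction m, hm using Nat.le_induction with
    | base => norm_num
    | succ k _ ih => rw [pow_succ]; omega
  have hlogQ : 0 ≤ Real.log Q := Real.log_natCast_nonneg Q
  rw [mul_comm]
  refine (addEnergy_le m hB hcard).trans (mul_le_mul_of_nonneg_left ?_ (by positivity))
  calc (1 + 2 * m * Real.log Q) ^ 4 ^ m ≤ (l ^ (3 * m + 4)) ^ 4 ^ m :=
        pow_le_pow_left₀ (by positivity) hlog _
    _ = l ^ ((3 * m + 4) * 4 ^ m) := (pow_mul _ _ _).symm
    _ ≤ l ^ 64 ^ m := pow_le_pow_right₀ hl1 hexp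
    _ = l ^ ((64 : ℝ) ^ m) := by
        rw [← Real.rpow_natCast]
        norm_num
end

section
/- There exists an absolute constant C > 0 such that the following holds. Let K ≥ 1, L ≥ 2 and n ≥ 1 be integers, let A be a finite subset of Q_{≤K}, let 𝒞 be a finite set of non-zero rationals, and let B ⊆ Q_{≤L} satisfy |B ∩ Q_{=ℓ}| ≤ n for every 1 ≤ ℓ ≤ L. Let ω : ℕ → ℝ_{≥0} be sub-multiplicative. Then the number of triples, counted with weight ω(k), of reduced fractions a/k ∈ A, b/ℓ ∈ B, c/q ∈ 𝒞 satisfying a/k − b/ℓ = c/q, is at most C · ( L·n·(log L)·M_log(ω·τ₃; L) · Σ'_{c/q ∈ 𝒞} ω(q)·τ₃(q)² · Σ'_{a/k ∈ A} ω(k) )^{1/2}, where Σ' indicates that each fraction is written in lowest terms. -/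
/-- The ternary divisor function `τ₃(n) = #{(a,b,c) ∈ ℕ³ : abc = n}`. -/
def tau3 (n : ℕ) : ℕ :=
  ((Finset.Icc 1 n ×ˢ Finset.Icc 1 n ×ˢ Finset.Icc 1 n).filter
    fun p => p.1 * p.2.1 * p.2.2 = n).card

/-- The logarithmic maximal average `M_log(ω; X) = max_{2 ≤ x ≤ X} (1/log x) ∑_{n ≤ x} ω(n)/n`. -/
noncomputable def MlogAvg (w : ℕ → ℝ) (X : ℕ) : ℝ :=
  ⨆ x ∈ Finset.Icc 2 X, (∑ n ∈ Finset.Icc 1 x, w n / (n : ℝ)) / Real.log x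

/-- `ω` is sub-multiplicative: `ω(ab) ≤ ω(a)ω(b)` and `ω(d) ≤ ω(n)` whenever `d ∣ n`. -/
def SubMult (w : ℕ → ℝ) : Prop :=
  (∀ a b : ℕ, 0 < a → 0 < b → w (a * b) ≤ w a * w b) ∧
    ∀ d n : ℕ, 0 < n → d ∣ n → w d ≤ w n

/-- The ordered factorizations of `n` into three positive factors. -/
def tripleFactorizations (n : ℕ) : Finset (ℕ × ℕ × ℕ) :=
  (Finset.Icc 1 n ×ˢ Finset.Icc 1 n ×ˢ Finset.Icc 1 n).filter fun p => p.1 * p.2.1 * p.2.2 = n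

theorem card_tripleFactorizations (n : ℕ) : (tripleFactorizations n).card = tau3 n := rfl

theorem mem_tripleFactorizations {n : ℕ} (hn : 0 < n) {a b c : ℕ} :
    (a, b, c) ∈ tripleFactorizations n ↔ a * b * c = n := by
  simp only [tripleFactorizations, Finset.mem_filter, Finset.mem_product, Finset.mem_Icc,
    and_iff_right_iff_imp]
  rintro rfl
  have hab := Nat.pos_of_mul_pos_right hn
  have hc := Nat.pos_of_mul_pos_left hn
  have ha := Nat.pos_of_mul_pos_right hab
  have hb := Nat.pos_of_mul_pos_left hab
  refine ⟨⟨ha, ?_⟩, ⟨hb, ?_⟩, hc, ?_⟩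
  · exact Nat.le_of_dvd hn ⟨b * c, by ring⟩
  · exact Nat.le_of_dvd hn ⟨a * c, by ring⟩
  · exact Nat.le_of_dvd hn ⟨a * b, by ring⟩

theorem tau3_pos {n : ℕ} (hn : 0 < n) : 0 < tau3 n := by
  rw [← card_tripleFactorizations, Finset.card_pos]
  exact ⟨(1, 1, n), (mem_tripleFactorizations hn).2 (by simp)⟩

theorem tau3_mul_le {a b : ℕ} (ha : 0 < a) (hb : 0 < b) : tau3 (a * b) ≤ tau3 a * tau3 b := by
  simp only [← card_tripleFactorizations]
  rw [← Finset.card_product]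
  refine Finset.card_le_card_of_surjOn
    (fun p => (p.1.1 * p.2.1, p.1.2.1 * p.2.2.1, p.1.2.2 * p.2.2.2)) ?_
  rintro ⟨x, y, z⟩ h
  rw [Finset.mem_coe, mem_tripleFactorizations (Nat.mul_pos ha hb)] at h
  obtain ⟨x₁, x₂, ⟨a', rfl⟩, ⟨b', rfl⟩, rfl⟩ :=
    exists_dvd_and_dvd_of_dvd_mul (⟨y * z, by rw [← h]; ring⟩ : x ∣ a * b)
  have hx₁ := Nat.pos_of_mul_pos_right ha
  have hx₂ := Nat.pos_of_mul_pos_right hb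
  have h' : y * z = a' * b' := by
    refine Nat.eq_of_mul_eq_mul_left (Nat.mul_pos hx₁ hx₂) ?_
    calc _ = _ := by ring
      _ = _ := h
      _ = _ := by ring
  obtain ⟨y₁, y₂, ⟨z₁, rfl⟩, ⟨z₂, rfl⟩, rfl⟩ :=
    exists_dvd_and_dvd_of_dvd_mul (⟨z, h'.symm⟩ : y ∣ a' * b')
  have hy₁ := Nat.pos_of_mul_pos_right (Nat.pos_of_mul_pos_left ha)
  have hy₂ := Nat.pos_of_mul_pos_right (Nat.pos_of_mul_pos_left hb)
  have hz : z = z₁ * z₂ := by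
    refine Nat.eq_of_mul_eq_mul_left (Nat.mul_pos hy₁ hy₂) ?_
    rw [h']; ring
  refine ⟨((x₁, y₁, z₁), (x₂, y₂, z₂)), ?_, by simp [hz]⟩
  rw [Finset.mem_coe, Finset.mem_product]
  exact ⟨(mem_tripleFactorizations ha).2 (by ring), (mem_tripleFactorizations hb).2 (by ring)⟩

theorem tau3_le_of_dvd {d n : ℕ} (hn : 0 < n) (h : d ∣ n) : tau3 d ≤ tau3 n := by
  obtain ⟨e, rfl⟩ := h
  have hd := Nat.pos_of_mul_pos_right hn
  have he := Nat.pos_of_mul_pos_left hn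
  simp only [← card_tripleFactorizations]
  refine Finset.card_le_card_of_injOn (fun p => (p.1, p.2.1, p.2.2 * e)) ?_ ?_
  · rintro ⟨a, b, c⟩ hp
    rw [Finset.mem_coe, mem_tripleFactorizations hd] at hp
    rw [Finset.mem_coe, mem_tripleFactorizations hn, ← hp]
    ring
  · rintro ⟨a, b, c⟩ - ⟨a', b', c'⟩ - h
    simpa [he.ne'] using h

theorem coprime_of_lcm_eq_mul {k q s u : ℕ} (hk : 0 < k) (hq : 0 < q)
    (hu : Nat.lcm k q = k * u) (hs : Nat.lcm k q = q * s) : Nat.Coprime s u := by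
  have hm : 0 < Nat.lcm k q := Nat.lcm_pos hk hq
  obtain ⟨s', hs'⟩ := Nat.gcd_dvd_left s u
  obtain ⟨u', hu'⟩ := Nat.gcd_dvd_right s u
  set d := Nat.gcd s u
  rw [hs'] at hs
  rw [hu'] at hu
  obtain ⟨e, he⟩ : d ∣ Nat.lcm k q := ⟨q * s', by rw [hs]; ring⟩
  have hd : 0 < d := Nat.pos_of_mul_pos_right (he ▸ hm)
  have hke : k ∣ e := ⟨u', Nat.eq_of_mul_eq_mul_left hd (by rw [← he, hu]; ring)⟩
  have hqe : q ∣ e := ⟨s', Nat.eq_of_mul_eq_mul_left hd (by rw [← he, hs]; ring)⟩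
  have hle := Nat.le_of_dvd (Nat.pos_of_mul_pos_left (he ▸ hm)) (Nat.lcm_dvd hke hqe)
  change d = 1
  rw [he] at hle
  nlinarith [Nat.pos_of_mul_pos_left (he ▸ hm : 0 < d * e)]

/-- Three positive integers each dividing the least common multiple of the other two factor
through a common divisor and three pairwise coprime integers. -/
theorem exists_pairwise_coprime_factorization {k l q : ℕ} (hk : 0 < k) (hl : 0 < l) (hq : 0 < q)
    (hkd : k ∣ Nat.lcm l q) (hld : l ∣ Nat.lcm k q) (hqd : q ∣ Nat.lcm k l) :
    ∃ g s t u : ℕ, Nat.Coprime s t ∧ Nat.Coprime s u ∧ Nat.Coprime t u ∧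
      k = g * s * t ∧ l = g * s * u ∧ q = g * t * u := by
  have h₁ : Nat.lcm k q = Nat.lcm k l :=
    Nat.dvd_antisymm (Nat.lcm_dvd (Nat.dvd_lcm_left _ _) hqd)
      (Nat.lcm_dvd (Nat.dvd_lcm_left _ _) hld)
  have h₂ : Nat.lcm l q = Nat.lcm k l :=
    Nat.dvd_antisymm (Nat.lcm_dvd (Nat.dvd_lcm_right _ _) hqd)
      (Nat.lcm_dvd hkd (Nat.dvd_lcm_left _ _))
  have hm : 0 < Nat.lcm k l := Nat.lcm_pos hk hl
  obtain ⟨u, hu⟩ := Nat.dvd_lcm_left k l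
  obtain ⟨t, ht⟩ := Nat.dvd_lcm_right k l
  obtain ⟨s, hs⟩ := hqd
  have hsu : Nat.Coprime s u := coprime_of_lcm_eq_mul hk hq (h₁ ▸ hu) (h₁ ▸ hs)
  have hst : Nat.Coprime s t := coprime_of_lcm_eq_mul hl hq (h₂ ▸ ht) (h₂ ▸ hs)
  have htu : Nat.Coprime t u := coprime_of_lcm_eq_mul hk hl hu ht
  have hdvd : s * t * u ∣ Nat.lcm k l := by
    refine (hsu.mul_left htu).mul_dvd_of_dvd_of_dvd (hst.mul_dvd_of_dvd_of_dvd ?_ ?_) ?_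
    · exact ⟨q, by rw [hs]; ring⟩
    · exact ⟨l, by rw [ht]; ring⟩
    · exact ⟨k, by rw [hu]; ring⟩
  obtain ⟨g, hg⟩ := hdvd
  refine ⟨g, s, t, u, hst, hsu, htu, ?_, ?_, ?_⟩
  · refine Nat.eq_of_mul_eq_mul_right (Nat.pos_of_mul_pos_left (hu ▸ hm)) ?_
    rw [← hu, hg]; ring
  · refine Nat.eq_of_mul_eq_mul_right (Nat.pos_of_mul_pos_left (ht ▸ hm)) ?_
    rw [← ht, hg]; ring
  · refine Nat.eq_of_mul_eq_mul_right (Nat.pos_of_mul_pos_left (hs ▸ hm)) ?_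
    rw [← hs, hg]; ring

theorem exists_den_factorization (x y : ℚ) :
    ∃ g s t u : ℕ, Nat.Coprime s t ∧ Nat.Coprime s u ∧ Nat.Coprime t u ∧
      x.den = g * s * t ∧ y.den = g * s * u ∧ (x - y).den = g * t * u := by
  refine exists_pairwise_coprime_factorization x.den_pos y.den_pos (x - y).den_pos ?_ ?_
    (Rat.sub_den_dvd_lcm x y)
  · simpa using Rat.add_den_dvd_lcm y (x - y)
  · simpa using Rat.sub_den_dvd_lcm x (x - y)

theorem dvd_of_dvd_mul_pairwise_coprime {g s t u d : ℕ} (hst : Nat.Coprime s t)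
    (hsu : Nat.Coprime s u)
    (htu : Nat.Coprime t u) (h₁ : d ∣ g * s * t) (h₂ : d ∣ g * s * u) (h₃ : d ∣ g * t * u) :
    d ∣ g := by
  have h₄ : d ∣ g * s := by
    have := Nat.dvd_gcd h₁ h₂
    rwa [Nat.gcd_mul_left, htu, mul_one] at this
  have := Nat.dvd_gcd h₄ (mul_assoc g t u ▸ h₃)
  rwa [Nat.gcd_mul_left, Nat.Coprime.gcd_eq_one (hst.mul_right hsu), mul_one] at this

theorem card_le_of_den_sub_dvd {g : ℕ} (hg : 0 < g) (Y : Finset ℚ)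
    (hY : ∀ y ∈ Y, 0 < y ∧ y ≤ 1) (h : ∀ y ∈ Y, ∀ y' ∈ Y, (y - y').den ∣ g) : Y.card ≤ g := by
  have hg' : (0 : ℚ) < g := by exact_mod_cast hg
  have : Y.card ≤ (Finset.Icc (1 : ℤ) g).card := by
    refine Finset.card_le_card_of_injOn (fun y => ⌈g * y⌉) ?_ ?_
    · intro y hy
      obtain ⟨h0, h1⟩ := hY y hy
      simp only [Finset.coe_Icc, Set.mem_Icc]
      refine ⟨Int.one_le_ceil_iff.2 (by positivity), Int.ceil_le.2 ?_⟩
      push_cast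
      nlinarith
    · intro y hy y' hy' hyy
      obtain ⟨e, he⟩ := h y hy y' hy'
      have hint : (g : ℚ) * y - g * y' = ((e * (y - y').num : ℤ) : ℚ) := by
        have := Rat.mul_den_eq_num (y - y')
        rw [← mul_sub, he]
        push_cast
        rw [← this]
        ring
      have h1 : |(g : ℚ) * y - g * y'| < 1 := by
        have hyy' : ((⌈(g : ℚ) * y⌉ : ℤ) : ℚ) = ⌈(g : ℚ) * y'⌉ := congrArg _ hyy
        have := Int.le_ceil ((g : ℚ) * y)
        have := Int.le_ceil ((g : ℚ) * y')
        have := Int.ceil_lt_add_one ((g : ℚ) * y)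
        have := Int.ceil_lt_add_one ((g : ℚ) * y')
        rw [abs_lt]
        constructor <;> linarith
      rw [hint, ← Int.cast_abs, ← Int.cast_one, Int.cast_lt, Int.abs_lt_one_iff] at h1
      rw [h1, Int.cast_zero, sub_eq_zero] at hint
      exact mul_left_cancel₀ hg'.ne' hint
  simpa using this

theorem mem_Qle {L : ℕ} {y : ℚ} (hy : y ∈ Qle L) :
    0 < y ∧ y ≤ 1 ∧ y.den ≤ L ∧ y ∈ Qeq y.den := by
  simp only [Qle, Finset.mem_biUnion, Finset.mem_Icc] at hy
  obtain ⟨q, ⟨hq, hqL⟩, hy⟩ := hy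
  have hy' := hy
  simp only [Qeq, Finset.mem_image, Finset.mem_filter, Finset.mem_Icc] at hy
  obtain ⟨a, ⟨⟨ha, haq⟩, hc⟩, rfl⟩ := hy
  have hden : ((a : ℚ) / q).den = q := by
    have := Rat.den_div_eq_of_coprime (a := a) (b := q) (by exact_mod_cast hq) (by simpa using hc)
    simpa using this
  have ha' : (0 : ℚ) < a := by exact_mod_cast ha
  have hq' : (0 : ℚ) < q := by exact_mod_cast hq
  refine ⟨by positivity, ?_, by rwa [hden], by rwa [hden]⟩
  rw [div_le_one hq']
  exact_mod_cast haq

/-- A Loomis–Whitney type bound for the number of differences with prescribed denominators. -/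
theorem sq_card_le_of_den_eq {g s t u : ℕ} (hst : Nat.Coprime s t) (hsu : Nat.Coprime s u)
    (htu : Nat.Coprime t u) (hg : 0 < g) (A B D : Finset ℚ) (S : Finset (ℚ × ℚ))
    (hS : ∀ p ∈ S, p.1 ∈ A ∧ p.2 ∈ B ∧ p.1 - p.2 ∈ D)
    (hA : ∀ x ∈ A, x.den = g * s * t) (hB : ∀ y ∈ B, y.den = g * s * u ∧ 0 < y ∧ y ≤ 1)
    (hD : ∀ z ∈ D, z.den = g * t * u) :
    S.card ^ 2 ≤ g * (A.card * B.card) * D.card := by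
  classical
  set f : ℚ → ℕ := fun z => (S.filter fun p => p.1 - p.2 = z).card with hf
  have hcard : S.card = ∑ z ∈ D, f z :=
    Finset.card_eq_sum_card_fiberwise fun p hp => (hS p hp).2.2
  set E := (S ×ˢ S).filter fun p => p.1.1 - p.1.2 = p.2.1 - p.2.2 with hE
  have hEcard : E.card = ∑ z ∈ D, f z ^ 2 := by
    rw [Finset.card_eq_sum_card_fiberwise (f := fun p : (ℚ × ℚ) × ℚ × ℚ => p.1.1 - p.1.2) (t := D)]
    · refine Finset.sum_congr rfl fun z _ => ?_
      rw [hf, sq, ← Finset.card_product]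
      congr 1
      ext p
      simp only [hE, Finset.mem_filter, Finset.mem_product]
      grind
    · intro p hp
      exact (hS p.1 (Finset.mem_product.1 (Finset.mem_filter.1 hp).1).1).2.2
  have hEle : E.card ≤ g * (A.card * B.card) := by
    rw [← Finset.card_product]
    refine Finset.card_le_mul_card_image_of_maps_to (f := fun p => (p.1.1, p.2.2)) ?_ g ?_
    · intro p hp
      have hp' := Finset.mem_product.1 (Finset.mem_filter.1 hp).1
      exact Finset.mem_product.2 ⟨(hS _ hp'.1).1, (hS _ hp'.2).2.1⟩
    · rintro ⟨x, y'⟩ -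
      have key : ∀ p ∈ E.filter (fun p => (p.1.1, p.2.2) = (x, y')),
          p.1.1 = x ∧ p.2.2 = y' ∧ p.2.1 = x - p.1.2 + y' ∧ p.1.2 ∈ B ∧
          p.2.1 ∈ A ∧ x ∈ A ∧ x - p.1.2 ∈ D := by
        intro p hp
        simp only [hE, Finset.mem_filter, Finset.mem_product, Prod.mk.injEq] at hp
        obtain ⟨⟨⟨h1, h2⟩, h3⟩, rfl, rfl⟩ := hp
        exact ⟨rfl, rfl, by rw [h3]; ring, (hS _ h1).2.1, (hS _ h2).1, (hS _ h1).1, (hS _ h1).2.2⟩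
      rw [← Finset.card_image_of_injOn (f := fun p => p.1.2)]
      · refine card_le_of_den_sub_dvd hg _ ?_ ?_
        · intro y hy
          obtain ⟨p, hp, rfl⟩ := Finset.mem_image.1 hy
          exact (hB _ (key p hp).2.2.2.1).2
        · intro y hy y₂ hy₂
          obtain ⟨p, hp, rfl⟩ := Finset.mem_image.1 hy
          obtain ⟨p₂, hp₂, rfl⟩ := Finset.mem_image.1 hy₂
          obtain ⟨-, -, hx, hyB, hxA, -, hzD⟩ := key p hp
          obtain ⟨-, -, hx₂, hyB₂, hxA₂, -, hzD₂⟩ := key p₂ hp₂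
          refine dvd_of_dvd_mul_pairwise_coprime hst hsu htu ?_ ?_ ?_
          · have := Rat.sub_den_dvd_lcm p₂.2.1 p.2.1
            rwa [hA _ hxA, hA _ hxA₂, Nat.lcm_self,
              show p₂.2.1 - p.2.1 = p.1.2 - p₂.1.2 by rw [hx, hx₂]; ring] at this
          · have := Rat.sub_den_dvd_lcm p.1.2 p₂.1.2
            rwa [(hB _ hyB).1, (hB _ hyB₂).1, Nat.lcm_self] at this
          · have := Rat.sub_den_dvd_lcm (x - p₂.1.2) (x - p.1.2)
            rwa [hD _ hzD, hD _ hzD₂, Nat.lcm_self, sub_sub_sub_cancel_left] at this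
      · rintro ⟨⟨a, b⟩, c, d⟩ hp ⟨⟨a', b'⟩, c', d'⟩ hp' (rfl : b = b')
        obtain ⟨h1, h2, h3, -⟩ := key _ hp
        obtain ⟨h1', h2', h3', -⟩ := key _ hp'
        simp only at h1 h2 h3 h1' h2' h3'
        simp [h1, h2, h3, h1', h2', h3']
  calc S.card ^ 2 = (∑ z ∈ D, f z) ^ 2 := by rw [hcard]
    _ ≤ D.card * ∑ z ∈ D, f z ^ 2 := sq_sum_le_card_mul_sum_sq
    _ ≤ D.card * (g * (A.card * B.card)) := by rw [← hEcard]; gcongr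
    _ = _ := mul_comm _ _

theorem sum_div_le_log_mul_MlogAvg (w : ℕ → ℝ) {L : ℕ} (hL : 2 ≤ L) :
    ∑ n ∈ Finset.Icc 1 L, w n / (n : ℝ) ≤ Real.log L * MlogAvg w L := by
  have hlog : 0 < Real.log L := Real.log_pos (by exact_mod_cast hL)
  rw [mul_comm, ← div_le_iff₀ hlog]
  have hmem : L ∈ Finset.Icc 2 L := by simp [hL]
  set F : ℕ → ℝ := fun x => ⨆ _ : x ∈ Finset.Icc 2 L,
    (∑ n ∈ Finset.Icc 1 x, w n / (n : ℝ)) / Real.log x with hF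
  have hbdd : BddAbove (Set.range F) := by
    refine Set.Finite.bddAbove (((Finset.Icc 2 L).finite_toSet.image F |>.union
      (Set.finite_singleton (0 : ℝ))).subset ?_)
    rintro _ ⟨x, rfl⟩
    by_cases hx : x ∈ Finset.Icc 2 L
    · exact Or.inl ⟨x, hx, rfl⟩
    · right
      simp only [hF, Set.mem_singleton_iff]
      have : IsEmpty (x ∈ Finset.Icc 2 L) := ⟨hx⟩
      exact Real.iSup_of_isEmpty _
  refine le_trans (le_of_eq ?_) (le_ciSup hbdd L)
  simp only [hF]
  have : Nonempty (L ∈ Finset.Icc 2 L) := ⟨hmem⟩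
  rw [ciSup_const]

theorem SubMult.mul_tau3 {w : ℕ → ℝ} (hw : ∀ k, 0 ≤ w k) (h : SubMult w) :
    SubMult fun k => w k * tau3 k := by
  refine ⟨fun a b ha hb => ?_, fun d n hn hd => ?_⟩
  · have h1 : (tau3 (a * b) : ℝ) ≤ tau3 a * tau3 b := by exact_mod_cast tau3_mul_le ha hb
    calc w (a * b) * tau3 (a * b) ≤ (w a * w b) * (tau3 a * tau3 b) :=
          mul_le_mul (h.1 a b ha hb) h1 (by positivity) (mul_nonneg (hw a) (hw b))
      _ = _ := by ring
  · have h1 : (tau3 d : ℝ) ≤ tau3 n := by exact_mod_cast tau3_le_of_dvd hn hd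
    exact mul_le_mul (h.2 d n hn hd) h1 (by positivity) (hw n)

theorem sum_factorization_weight_le_tau3 {k L : ℕ} (hk : 0 < k) (hL : 0 < L)
    (P : Finset (ℕ × ℕ × ℕ × ℕ))
    (hP : ∀ p ∈ P, 0 < p.2.2.2 ∧ p.1 * p.2.1 * p.2.2.2 ≤ L) :
    ∑ p ∈ P with k = p.1 * p.2.1 * p.2.2.1, ((p.1 * p.2.1 : ℕ) : ℝ) / L ≤ tau3 k := by
  classical
  have hmaps : ∀ p ∈ P.filter (fun p => k = p.1 * p.2.1 * p.2.2.1),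
      (p.1, p.2.1, p.2.2.1) ∈ tripleFactorizations k := fun p hp =>
    (mem_tripleFactorizations hk).2 (Finset.mem_filter.1 hp).2.symm
  rw [← Finset.sum_fiberwise_of_maps_to hmaps, ← card_tripleFactorizations,
    Finset.cast_card]
  refine Finset.sum_le_sum ?_
  rintro ⟨g, s, t⟩ hgst
  rw [mem_tripleFactorizations hk] at hgst
  have hgs : 0 < g * s := Nat.pos_of_mul_pos_right (hgst ▸ hk)
  set G := (P.filter (fun p => k = p.1 * p.2.1 * p.2.2.1)).filter
    (fun p => (p.1, p.2.1, p.2.2.1) = (g, s, t)) with hG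
  have hGmem : ∀ p ∈ G, p.1 = g ∧ p.2.1 = s ∧ p.2.2.1 = t ∧ 0 < p.2.2.2 ∧ g * s * p.2.2.2 ≤ L := by
    intro p hp
    simp only [hG, Finset.mem_filter, Prod.mk.injEq] at hp
    obtain ⟨⟨hp, -⟩, rfl, rfl, rfl⟩ := hp
    exact ⟨rfl, rfl, rfl, hP p hp⟩
  have hcard : G.card ≤ L / (g * s) := by
    have : G.card ≤ (Finset.Icc 1 (L / (g * s))).card := by
      refine Finset.card_le_card_of_injOn (fun p => p.2.2.2) ?_ ?_
      · intro p hp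
        obtain ⟨-, -, -, h0, h1⟩ := hGmem p hp
        simp only [Finset.coe_Icc, Set.mem_Icc]
        exact ⟨h0, (Nat.le_div_iff_mul_le hgs).2 (by rwa [mul_comm])⟩
      · rintro ⟨a, b, c, d⟩ hp ⟨a', b', c', d'⟩ hp' (rfl : d = d')
        obtain ⟨h1, h2, h3, -⟩ := hGmem _ hp
        obtain ⟨h1', h2', h3', -⟩ := hGmem _ hp'
        simp only at h1 h2 h3 h1' h2' h3'
        simp [h1, h2, h3, h1', h2', h3']
    simpa using this
  have hmul : G.card * (g * s) ≤ L := (Nat.le_div_iff_mul_le hgs).1 hcard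
  calc ∑ p ∈ G, ((p.1 * p.2.1 : ℕ) : ℝ) / L = ∑ _p ∈ G, ((g * s : ℕ) : ℝ) / L := by
        refine Finset.sum_congr rfl fun p hp => ?_
        rw [(hGmem p hp).1, (hGmem p hp).2.1]
    _ = ((G.card * (g * s) : ℕ) : ℝ) / L := by
        rw [Finset.sum_const, nsmul_eq_mul]
        push_cast
        ring
    _ ≤ 1 := by
        rw [div_le_one (by exact_mod_cast hL)]
        exact_mod_cast hmul

theorem sum_factorization_submult_le {q L : ℕ} (hq : 0 < q) {v : ℕ → ℝ} (hv : ∀ k, 0 ≤ v k)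
    (hsub : SubMult v) (P : Finset (ℕ × ℕ × ℕ × ℕ)) (hP : ∀ p ∈ P, p.2.1 ∈ Finset.Icc 1 L) :
    ∑ p ∈ P with q = p.1 * p.2.2.1 * p.2.2.2, v (p.1 * p.2.1 * p.2.2.1) / p.2.1 ≤
      tau3 q * (v q * ∑ s ∈ Finset.Icc 1 L, v s / s) := by
  classical
  have hmaps : ∀ p ∈ P.filter (fun p => q = p.1 * p.2.2.1 * p.2.2.2),
      (p.1, p.2.2.1, p.2.2.2) ∈ tripleFactorizations q := fun p hp =>
    (mem_tripleFactorizations hq).2 (Finset.mem_filter.1 hp).2.symm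
  rw [← Finset.sum_fiberwise_of_maps_to hmaps, ← card_tripleFactorizations, ← nsmul_eq_mul]
  refine Finset.sum_le_card_nsmul _ _ _ ?_
  rintro ⟨g, t, u⟩ hgtu
  rw [mem_tripleFactorizations hq] at hgtu
  set G := (P.filter (fun p => q = p.1 * p.2.2.1 * p.2.2.2)).filter
    (fun p => (p.1, p.2.2.1, p.2.2.2) = (g, t, u)) with hG
  have hGmem : ∀ p ∈ G, p.1 = g ∧ p.2.2.1 = t ∧ p.2.2.2 = u ∧ p.2.1 ∈ Finset.Icc 1 L := by
    intro p hp
    simp only [hG, Finset.mem_filter, Prod.mk.injEq] at hp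
    obtain ⟨⟨hp, -⟩, rfl, rfl, rfl⟩ := hp
    exact ⟨rfl, rfl, rfl, hP p hp⟩
  calc ∑ p ∈ G, v (p.1 * p.2.1 * p.2.2.1) / p.2.1
      ≤ ∑ p ∈ G, v q * (v p.2.1 / p.2.1) := by
        refine Finset.sum_le_sum fun p hp => ?_
        obtain ⟨h1, h2, -, h3⟩ := hGmem p hp
        rw [h1, h2, ← mul_div_assoc]
        refine div_le_div_of_nonneg_right ?_ (Nat.cast_nonneg _)
        have hgt : 0 < g * t := Nat.pos_of_mul_pos_right (hgtu ▸ hq)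
        calc v (g * p.2.1 * t) = v (g * t * p.2.1) := by congr 1; ring
          _ ≤ v (g * t) * v p.2.1 := hsub.1 _ _ hgt (Finset.mem_Icc.1 h3).1
          _ ≤ v q * v p.2.1 :=
            mul_le_mul_of_nonneg_right (hsub.2 _ _ hq ⟨u, hgtu.symm⟩) (hv _)
    _ = v q * ∑ s ∈ G.image (fun p => p.2.1), v s / s := by
        rw [← Finset.mul_sum, Finset.sum_image]
        rintro ⟨a, b, c, d⟩ hp ⟨a', b', c', d'⟩ hp' (rfl : b = b')
        obtain ⟨h1, h2, h3, -⟩ := hGmem _ hp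
        obtain ⟨h1', h2', h3', -⟩ := hGmem _ hp'
        simp only at h1 h2 h3 h1' h2' h3'
        simp [h1, h2, h3, h1', h2', h3']
    _ ≤ _ := by
        refine mul_le_mul_of_nonneg_left ?_ (hv q)
        refine Finset.sum_le_sum_of_subset_of_nonneg ?_ fun s _ _ =>
          div_nonneg (hv s) (Nat.cast_nonneg _)
        intro s hs
        obtain ⟨p, hp, rfl⟩ := Finset.mem_image.1 hs
        exact (hGmem p hp).2.2.2

theorem sum_card_filter_mul {ι κ : Type*} (P : Finset ι) (D : Finset κ)
    (R : κ → ι → Prop) [∀ z p, Decidable (R z p)] (h : ι → ℝ) :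
    ∑ p ∈ P, ((D.filter fun z => R z p).card : ℝ) * h p =
      ∑ z ∈ D, ∑ p ∈ P with R z p, h p := by
  simp only [Finset.sum_filter]
  rw [Finset.sum_comm]
  refine Finset.sum_congr rfl fun p _ => ?_
  rw [← Finset.sum_filter, Finset.sum_const, nsmul_eq_mul]

theorem sq_weighted_differences_le {L n : ℕ} (hL : 2 ≤ L) {A D B : Finset ℚ}
    (hB : B ⊆ Qle L) (hn : ∀ l : ℕ, 1 ≤ l → l ≤ L → (B ∩ Qeq l).card ≤ n)
    {w : ℕ → ℝ} (hw : ∀ k, 0 ≤ w k) (hsub : SubMult w) :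
    (∑ x ∈ A, ∑ y ∈ B, if x - y ∈ D then w x.den else 0) ^ 2 ≤
      (∑ x ∈ A, w x.den) * ((n * L : ℝ) * ∑ z ∈ D, (tau3 z.den : ℝ) * (w z.den * tau3 z.den *
        ∑ s ∈ Finset.Icc 1 L, w s * tau3 s / s)) := by
  classical
  have hL0 : (0 : ℝ) < L := by exact_mod_cast (by omega : 0 < L)
  choose g s t u hst hsu htu hk hl hq using fun p : ℚ × ℚ => exists_den_factorization p.1 p.2
  set T := (A ×ˢ B).filter fun p => p.1 - p.2 ∈ D with hT
  set φ : ℚ × ℚ → ℕ × ℕ × ℕ × ℕ := fun p => (g p, s p, t p, u p)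
  set P := T.image φ
  set v : ℕ → ℝ := fun k => w k * tau3 k with hv
  have hv0 : ∀ k, 0 ≤ v k := fun k => mul_nonneg (hw k) (Nat.cast_nonneg _)
  have hPprop : ∀ p ∈ P, 0 < p.1 ∧ 0 < p.2.1 ∧ 0 < p.2.2.1 ∧ 0 < p.2.2.2 ∧
      p.1 * p.2.1 * p.2.2.2 ≤ L ∧ Nat.Coprime p.2.1 p.2.2.1 ∧ Nat.Coprime p.2.1 p.2.2.2 ∧
      Nat.Coprime p.2.2.1 p.2.2.2 := by
    intro p hp
    obtain ⟨π, hπ, rfl⟩ := Finset.mem_image.1 hp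
    have hπ' := Finset.mem_product.1 (Finset.mem_filter.1 hπ).1
    have h1 : 0 < g π * s π * t π := hk π ▸ π.1.den_pos
    have h2 : 0 < g π * s π * u π := hl π ▸ π.2.den_pos
    have h3 := Nat.pos_of_mul_pos_right h1
    exact ⟨Nat.pos_of_mul_pos_right h3, Nat.pos_of_mul_pos_left h3, Nat.pos_of_mul_pos_left h1,
      Nat.pos_of_mul_pos_left h2, hl π ▸ (mem_Qle (hB hπ'.2)).2.2.1, hst π, hsu π, htu π⟩
  have hLHS : (∑ x ∈ A, ∑ y ∈ B, if x - y ∈ D then w x.den else 0) =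
      ∑ p ∈ P, w (p.1 * p.2.1 * p.2.2.1) * (T.filter fun π => φ π = p).card := by
    rw [← Finset.sum_product' (f := fun x y : ℚ => if x - y ∈ D then w x.den else 0),
      ← Finset.sum_filter, ← hT,
      ← Finset.sum_fiberwise_of_maps_to (g := φ) fun π hπ => Finset.mem_image_of_mem φ hπ]
    refine Finset.sum_congr rfl fun p _ => ?_
    rw [mul_comm, ← nsmul_eq_mul]
    refine Finset.sum_eq_card_nsmul fun π hπ => ?_
    rw [← (Finset.mem_filter.1 hπ).2, hk π]
  set Ak : ℕ × ℕ × ℕ × ℕ → Finset ℚ :=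
    fun p => A.filter fun x => x.den = p.1 * p.2.1 * p.2.2.1
  set Dq : ℕ × ℕ × ℕ × ℕ → Finset ℚ :=
    fun p => D.filter fun z => z.den = p.1 * p.2.2.1 * p.2.2.2
  have hlocal : ∀ p ∈ P, ((T.filter fun π => φ π = p).card : ℝ) ^ 2 ≤
      p.1 * ((Ak p).card * n) * (Dq p).card := by
    intro p hp
    obtain ⟨h1, h2, h3, h4, h5, h6, h7, h8⟩ := hPprop p hp
    set Bl := B.filter fun y => y.den = p.1 * p.2.1 * p.2.2.2
    have hBn : Bl.card ≤ n := by
      refine le_trans (Finset.card_le_card ?_)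
        (hn (p.1 * p.2.1 * p.2.2.2) (Nat.mul_pos (Nat.mul_pos h1 h2) h4) h5)
      intro y hy
      obtain ⟨hy, hyd⟩ := Finset.mem_filter.1 hy
      exact Finset.mem_inter.2 ⟨hy, hyd ▸ (mem_Qle (hB hy)).2.2.2⟩
    have := sq_card_le_of_den_eq h6 h7 h8 h1 (Ak p) Bl (Dq p) (T.filter fun π => φ π = p)
      (by
        intro π hπ
        obtain ⟨hπT, rfl⟩ := Finset.mem_filter.1 hπ
        obtain ⟨hπ1, hπ2⟩ := Finset.mem_filter.1 hπT
        obtain ⟨hπA, hπB⟩ := Finset.mem_product.1 hπ1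
        exact ⟨Finset.mem_filter.2 ⟨hπA, hk π⟩, Finset.mem_filter.2 ⟨hπB, hl π⟩,
          Finset.mem_filter.2 ⟨hπ2, hq π⟩⟩)
      (fun x hx => (Finset.mem_filter.1 hx).2)
      (fun y hy => ⟨(Finset.mem_filter.1 hy).2, (mem_Qle (hB (Finset.mem_filter.1 hy).1)).1,
        (mem_Qle (hB (Finset.mem_filter.1 hy).1)).2.1⟩)
      (fun z hz => (Finset.mem_filter.1 hz).2)
    have this' : (T.filter fun π => φ π = p).card ^ 2 ≤
        p.1 * ((Ak p).card * n) * (Dq p).card := this.trans (by gcongr)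
    exact_mod_cast this'
  have hCS := Finset.sum_sq_le_sum_mul_sum_of_sq_le_mul P
    (r := fun p => w (p.1 * p.2.1 * p.2.2.1) * (T.filter fun π => φ π = p).card)
    (f := fun p => ((Ak p).card : ℝ) * (w (p.1 * p.2.1 * p.2.2.1) / tau3 (p.1 * p.2.1 * p.2.2.1) *
      (((p.1 * p.2.1 : ℕ) : ℝ) / L)))
    (g := fun p => ((Dq p).card : ℝ) * ((n * L : ℝ) * (v (p.1 * p.2.1 * p.2.2.1) / p.2.1)))
    (fun p _ => mul_nonneg (Nat.cast_nonneg _) (mul_nonneg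
      (div_nonneg (hw _) (Nat.cast_nonneg _)) (by positivity)))
    (fun p _ => mul_nonneg (Nat.cast_nonneg _) (mul_nonneg (by positivity)
      (div_nonneg (hv0 _) (Nat.cast_nonneg _))))
    (by
      intro p hp
      obtain ⟨h1, h2, h3, -⟩ := hPprop p hp
      have hτ : (tau3 (p.1 * p.2.1 * p.2.2.1) : ℝ) ≠ 0 := by
        exact_mod_cast (tau3_pos (Nat.mul_pos (Nat.mul_pos h1 h2) h3)).ne'
      have hs0 : (p.2.1 : ℝ) ≠ 0 := by exact_mod_cast h2.ne'
      rw [mul_pow]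
      refine (mul_le_mul_of_nonneg_left (hlocal p hp) (sq_nonneg _)).trans (le_of_eq ?_)
      simp only [hv]
      push_cast
      field_simp)
  rw [hLHS]
  refine hCS.trans (mul_le_mul ?_ ?_ ?_ (Finset.sum_nonneg fun x _ => hw _))
  · rw [sum_card_filter_mul P A (fun x p => x.den = p.1 * p.2.1 * p.2.2.1)]
    refine Finset.sum_le_sum fun x _ => ?_
    have hτ : (0 : ℝ) < tau3 x.den := by exact_mod_cast tau3_pos x.den_pos
    calc _ = w x.den / tau3 x.den * ∑ p ∈ P with x.den = p.1 * p.2.1 * p.2.2.1,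
            ((p.1 * p.2.1 : ℕ) : ℝ) / L := by
          rw [Finset.mul_sum]
          refine Finset.sum_congr rfl fun p hp => ?_
          rw [← (Finset.mem_filter.1 hp).2]
      _ ≤ w x.den / tau3 x.den * tau3 x.den :=
          mul_le_mul_of_nonneg_left
            (sum_factorization_weight_le_tau3 x.den_pos (by omega) P fun p hp =>
              ⟨(hPprop p hp).2.2.2.1, (hPprop p hp).2.2.2.2.1⟩)
            (div_nonneg (hw _) hτ.le)
      _ = w x.den := div_mul_cancel₀ _ hτ.ne'
  · rw [sum_card_filter_mul P D (fun z p => z.den = p.1 * p.2.2.1 * p.2.2.2), Finset.mul_sum]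
    refine Finset.sum_le_sum fun z _ => ?_
    rw [← Finset.mul_sum]
    refine mul_le_mul_of_nonneg_left ?_ (by positivity)
    refine sum_factorization_submult_le z.den_pos hv0 (hsub.mul_tau3 hw) P fun p hp => ?_
    obtain ⟨h1, h2, h3, h4, h5, -⟩ := hPprop p hp
    refine Finset.mem_Icc.2 ⟨h2, ?_⟩
    calc p.2.1 ≤ p.1 * p.2.1 * p.2.2.2 :=
          Nat.le_of_dvd (Nat.mul_pos (Nat.mul_pos h1 h2) h4) ⟨p.1 * p.2.2.2, by ring⟩
      _ ≤ L := h5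
  · exact Finset.sum_nonneg fun p _ => mul_nonneg (Nat.cast_nonneg _)
      (mul_nonneg (by positivity) (div_nonneg (hv0 _) (Nat.cast_nonneg _)))

theorem statement_3 :
    ∃ C > (0 : ℝ), ∀ K L n : ℕ, 1 ≤ K → 2 ≤ L → 1 ≤ n →
      ∀ A : Finset ℚ, A ⊆ Qle K →
      ∀ 𝒞 : Finset ℚ, (0 : ℚ) ∉ 𝒞 →
      ∀ B : Finset ℚ, B ⊆ Qle L →
        (∀ ℓ : ℕ, 1 ≤ ℓ → ℓ ≤ L → (B ∩ Qeq ℓ).card ≤ n) →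
      ∀ w : ℕ → ℝ, (∀ k, 0 ≤ w k) → SubMult w →
        (∑ x ∈ A, ∑ y ∈ B, if x - y ∈ 𝒞 then w x.den else 0) ≤
          C * Real.sqrt ((L : ℝ) * n * Real.log L * MlogAvg (fun k => w k * tau3 k) L *
            (∑ z ∈ 𝒞, w z.den * (tau3 z.den : ℝ) ^ 2) * ∑ x ∈ A, w x.den) := by
  refine ⟨1, one_pos, ?_⟩
  intro K L n _ hL _ A _ 𝒞 _ B hB hn w hw hsub
  rw [one_mul]
  refine Real.le_sqrt_of_sq_le ((sq_weighted_differences_le hL hB hn hw hsub).trans ?_)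
  have hAsum : 0 ≤ ∑ x ∈ A, w x.den := Finset.sum_nonneg fun x _ => hw _
  have hCsum : 0 ≤ ∑ z ∈ 𝒞, w z.den * (tau3 z.den : ℝ) ^ 2 :=
    Finset.sum_nonneg fun z _ => mul_nonneg (hw _) (sq_nonneg _)
  have hfactor : ∑ z ∈ 𝒞, (tau3 z.den : ℝ) * (w z.den * tau3 z.den *
      ∑ s ∈ Finset.Icc 1 L, w s * tau3 s / s) =
      (∑ z ∈ 𝒞, w z.den * (tau3 z.den : ℝ) ^ 2) * ∑ s ∈ Finset.Icc 1 L, w s * tau3 s / s := by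
    rw [Finset.sum_mul]
    exact Finset.sum_congr rfl fun z _ => by ring
  calc _ = ((n * L : ℝ) * (∑ z ∈ 𝒞, w z.den * (tau3 z.den : ℝ) ^ 2) * ∑ x ∈ A, w x.den) *
        ∑ s ∈ Finset.Icc 1 L, w s * tau3 s / s := by
        rw [hfactor]
        ring
    _ ≤ ((n * L : ℝ) * (∑ z ∈ 𝒞, w z.den * (tau3 z.den : ℝ) ^ 2) * ∑ x ∈ A, w x.den) *
        (Real.log L * MlogAvg (fun k => w k * tau3 k) L) :=
        mul_le_mul_of_nonneg_left (sum_div_le_log_mul_MlogAvg _ hL) (by positivity)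
    _ = _ := by ring
end
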